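/- arXiv:2412.00389 — 3 statements merged into one kernel-verified Lean document; each statement's English description precedes it below -/
import Mathlib

section
/- There exists an absolute constant c > 0 with the following property. Let N, M be positive integers and let a_1, ..., a_N be positive integers (not necessarily distinct) with a_n ≤ M for all 1 ≤ n ≤ N. For d ∈ ℕ set ω(d) = #{n ≤ N : d divides a_n}. Let α ∈ (0,1], let y = max((ln M)^α, 2), and let 𝒟 be the collection of squarefree positive integers all of whose prime divisors lie in (1, y] (with 1 ∈ 𝒟). Suppose K > 0 is a constant and g is a multiplicative arithmetic function with g(n) > 0 for n ∈ 𝒟 such that ω(n) ≤ K/g(n) for every n ∈ 𝒟. Then for every s ∈ ℕ, Σ_{n=1}^{N} (a_n/φ(a_n))^s ≤ K · (c/α)^s · Π_{p ≤ y} (1 + ((1+p^{-1})^s − 1)/g(p)), where the product runs over primes p ≤ y. -/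
/-!
In `a / φ(a) = ∏_{p ∣ a} (1 - 1/p)⁻¹` the primes `p > log a` contribute a bounded factor, because
`a` has at most `log a / log 2` prime factors. By Mertens-type upper and lower bounds, those in
`(y, log a]` contribute `O(log log a / log y) = O(1/α)`, as `y ≥ (log a)^α`. Since
`∏ (1 - 1/p²)⁻¹` is bounded, `a / φ(a) ≤ (c/α) ∏_{p ≤ y, p ∣ a} (1 + 1/p)`. The `s`-th power of
this product expands as a sum of `∏_{p ∣ d} ((1 + 1/p)^s - 1)` over squarefree divisors `d` of `a`
with all prime factors at most `y`; summing over `a = a_n` first replaces each `d` by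
`ω(d) ≤ K / g(d)`, and the sum over `d` factors back into an Euler product.
-/

section

open Nat hiding log
open Finset Real

theorem sum_Icc_le_prod_primesLE {f : ℕ →* ℝ} (hf₀ : ∀ n, 0 ≤ f n)
    (hf₁ : ∀ p : ℕ, p.Prime → f p < 1) (n : ℕ) :
    ∑ k ∈ Icc 1 n, f k ≤ ∏ p ∈ primesLE n, (1 - f p)⁻¹ := by
  have hsum := (EulerProduct.summable_and_hasSum_smoothNumbers_prod_primesBelow_geometric
    (f := f) (fun hp ↦ by rw [norm_of_nonneg (hf₀ _)]; exact hf₁ _ hp) (n + 1)).2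
  have hmem : ∀ k ∈ Icc 1 n, k ∈ (n + 1).smoothNumbers := fun k hk ↦ by
    rw [mem_Icc] at hk
    exact mem_smoothNumbers_of_lt (by lia) (by lia)
  rw [← sum_subtype_of_mem (fun k ↦ f k) hmem]
  exact sum_le_hasSum _ (fun k _ ↦ hf₀ k) hsum

theorem prod_primesLE_le_tsum {f : ℕ →* ℝ} (hf₀ : ∀ n, 0 ≤ f n) (hf : Summable f) (n : ℕ) :
    ∏ p ∈ primesLE n, (1 - f p)⁻¹ ≤ ∑' k, f k :=
  (EulerProduct.prod_primesBelow_geometric_eq_tsum_smoothNumbers hf (n + 1)).trans_le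
    (hf.tsum_subtype_le f _ hf₀)

/-- The completely multiplicative function `n ↦ n ^ (-σ)`, whose Euler products are compared with
partial sums of the harmonic series (`σ = 1`) and with `ζ(σ)` (`1 < σ`). -/
noncomputable def natRpowNegHom (σ : ℝ) : ℕ →* ℝ where
  toFun n := (n : ℝ) ^ (-σ)
  map_one' := by simp
  map_mul' m n := by rw [cast_mul, mul_rpow m.cast_nonneg n.cast_nonneg]

theorem natRpowNegHom_apply (σ : ℝ) (n : ℕ) : natRpowNegHom σ n = (n : ℝ) ^ (-σ) := rfl

theorem natRpowNegHom_nonneg (σ : ℝ) (n : ℕ) : 0 ≤ natRpowNegHom σ n :=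
  rpow_nonneg n.cast_nonneg _

theorem log_add_one_le_prod_primesLE (n : ℕ) :
    log (n + 1) ≤ ∏ p ∈ primesLE n, (1 - (p : ℝ)⁻¹)⁻¹ := by
  have h := sum_Icc_le_prod_primesLE (natRpowNegHom_nonneg 1)
    (fun p hp ↦ rpow_lt_one_of_one_lt_of_neg (mod_cast hp.one_lt) (by simp)) n
  simp only [natRpowNegHom_apply, rpow_neg_one] at h
  calc log (n + 1) ≤ harmonic n := mod_cast log_add_one_le_harmonic n
    _ = ∑ k ∈ Icc 1 n, (k : ℝ)⁻¹ := by simp [harmonic_eq_sum_Icc]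
    _ ≤ _ := h

theorem tsum_natCast_rpow_neg_le {σ : ℝ} (hσ : 1 < σ) :
    ∑' n : ℕ, (n : ℝ) ^ (-σ) ≤ 1 + (σ - 1)⁻¹ := by
  have hsum : Summable fun n : ℕ ↦ (n : ℝ) ^ (-σ) := summable_nat_rpow.mpr (by linarith)
  have hterm : 0 ≤ ZetaAsymptotics.termTSum σ := tsum_nonneg fun n ↦ ZetaAsymptotics.term_nonneg _ _
  calc ∑' n : ℕ, (n : ℝ) ^ (-σ) = ∑' n : ℕ, 1 / (n + 1 : ℝ) ^ σ := by
        rw [hsum.tsum_eq_zero_add, cast_zero, zero_rpow (by linarith), zero_add]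
        exact tsum_congr fun n ↦ by rw [rpow_neg (by positivity), one_div, cast_add_one]
    _ = 1 + (σ - 1)⁻¹ - σ * ZetaAsymptotics.termTSum σ := by
        linarith [ZetaAsymptotics.zeta_limit_aux1 hσ, one_div (σ - 1)]
    _ ≤ 1 + (σ - 1)⁻¹ := sub_le_self _ (by positivity)

theorem prod_primesLE_rpow_neg_le {σ : ℝ} (hσ : 1 < σ) (n : ℕ) :
    ∏ p ∈ primesLE n, (1 - (p : ℝ) ^ (-σ))⁻¹ ≤ 1 + (σ - 1)⁻¹ :=
  (prod_primesLE_le_tsum (natRpowNegHom_nonneg σ) (summable_nat_rpow.mpr (by linarith)) n).trans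
    (tsum_natCast_rpow_neg_le hσ)


theorem prod_primesLE_pow_div_dvd_factorial (n : ℕ) : ∏ p ∈ primesLE n, p ^ (n / p) ∣ n ! := by
  refine Finset.prod_dvd_of_isRelPrime (fun p hp q hq hpq ↦ ?_) fun p hp ↦ ?_
  · exact coprime_iff_isRelPrime.mp (Nat.Coprime.pow _ _
      ((coprime_primes (prime_of_mem_primesLE hp) (prime_of_mem_primesLE hq)).mpr hpq))
  · have hmul := (prime_of_mem_primesLE hp).emultiplicity_factorial_mul (n := n / p)
    exact (pow_dvd_of_le_emultiplicity (hmul ▸ le_add_self)).trans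
      (factorial_dvd_factorial (mul_div_le n p))

theorem sum_primesLE_div_mul_log_le (n : ℕ) :
    ∑ p ∈ primesLE n, ((n / p : ℕ) : ℝ) * log p ≤ n * log n := by
  have hpos : ∀ p ∈ primesLE n, ((p : ℝ) ^ (n / p)) ≠ 0 := fun p hp ↦
    pow_ne_zero _ (mod_cast (prime_of_mem_primesLE hp).ne_zero)
  have hle : ∏ p ∈ primesLE n, p ^ (n / p) ≤ n ^ n :=
    (le_of_dvd n.factorial_pos (prod_primesLE_pow_div_dvd_factorial n)).trans n.factorial_le_pow
  calc ∑ p ∈ primesLE n, ((n / p : ℕ) : ℝ) * log p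
      = log (∏ p ∈ primesLE n, p ^ (n / p) : ℕ) := by
        push_cast
        rw [log_prod hpos]
        simp only [Real.log_pow]
    _ ≤ log (n ^ n : ℕ) := log_le_log
        (mod_cast prod_pos fun p hp ↦ pow_pos (prime_of_mem_primesLE hp).pos _) (mod_cast hle)
    _ = n * log n := by rw [cast_pow, Real.log_pow]

theorem sum_primesLE_log_div_le (n : ℕ) : ∑ p ∈ primesLE n, log p / p ≤ 2 * log n := by
  rcases n.eq_zero_or_pos with rfl | hn
  · simp
  have hdiv : ∀ p ∈ primesLE n, n * (log p / p) ≤ 2 * (((n / p : ℕ) : ℝ) * log p) := by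
    intro p hp
    have hp₀ := (prime_of_mem_primesLE hp).pos
    have hp₁ : 1 ≤ n / p := Nat.div_pos (le_of_mem_primesLE hp) hp₀
    have hnat : n ≤ 2 * (n / p) * p := by nlinarith [lt_mul_div_succ n hp₀]
    have hreal : (n : ℝ) / p ≤ 2 * (n / p : ℕ) := by
      rw [div_le_iff₀ (mod_cast hp₀)]
      exact_mod_cast hnat
    calc n * (log p / p) = n / p * log p := by ring
      _ ≤ 2 * (n / p : ℕ) * log p := by gcongr
      _ = _ := mul_assoc _ _ _
  refine le_of_mul_le_mul_left ?_ (cast_pos.mpr hn : (0 : ℝ) < n)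
  calc n * ∑ p ∈ primesLE n, log p / p
      ≤ 2 * ∑ p ∈ primesLE n, ((n / p : ℕ) : ℝ) * log p := by
        simpa only [mul_sum] using sum_le_sum hdiv
    _ ≤ 2 * (n * log n) := by grw [sum_primesLE_div_mul_log_le]
    _ = n * (2 * log n) := by ring

theorem inv_one_sub_inv_le_mul_exp {x t : ℝ} (hx : 2 ≤ x) (ht : 0 ≤ t) :
    (1 - x⁻¹)⁻¹ ≤ (1 - x ^ (-(1 + t)))⁻¹ * exp (2 * t * (log x / x)) := by
  have hx₀ : 0 < x := by linarith
  have hinv : x⁻¹ ≤ 2⁻¹ := inv_anti₀ two_pos hx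
  have hz : 0 ≤ t * log x := mul_nonneg ht (log_nonneg (by linarith))
  have hrpow : x ^ (-(1 + t)) = x⁻¹ * exp (-(t * log x)) := by
    rw [neg_add, rpow_add hx₀, rpow_neg_one, rpow_def_of_pos hx₀ (-t)]
    ring_nf
  have hexp₀ : 1 - t * log x ≤ exp (-(t * log x)) := one_sub_le_exp_neg _
  have hexp₁ : exp (-(t * log x)) ≤ 1 := exp_le_one_iff.mpr (by linarith)
  have hxinv : 0 < x⁻¹ := by positivity
  have hden : 0 < 1 - x ^ (-(1 + t)) := by rw [hrpow]; nlinarith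
  rw [inv_mul_eq_div, le_div_iff₀ hden, inv_mul_le_iff₀ (by linarith), hrpow]
  calc 1 - x⁻¹ * exp (-(t * log x)) ≤ 1 - x⁻¹ * (1 - t * log x) := by gcongr
    _ ≤ (1 - x⁻¹) * (2 * t * (log x / x) + 1) := by
        rw [div_eq_inv_mul]
        nlinarith [mul_nonneg hxinv.le hz]
    _ ≤ _ := by
        gcongr
        · linarith
        · exact add_one_le_exp _

theorem one_le_inv_one_sub_inv {x : ℝ} (hx : 1 < x) : 1 ≤ (1 - x⁻¹)⁻¹ :=
  (one_le_inv₀ (sub_pos.mpr (inv_lt_one_of_one_lt₀ hx))).mpr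
    (sub_le_self _ (inv_nonneg.mpr (by linarith)))

theorem prod_primesLE_inv_one_sub_inv_le (n : ℕ) :
    ∏ p ∈ primesLE n, (1 - (p : ℝ)⁻¹)⁻¹ ≤ exp 4 * (2 + log n) := by
  have hlog : 0 ≤ log (n : ℝ) := log_natCast_nonneg n
  -- Rankin's trick: moving the exponent from `1` to `1 + t` costs a bounded factor,
  -- while `ζ(1 + t) ≤ 1 + 1 / t = 2 + log n`.
  obtain ⟨t, ht⟩ : ∃ t : ℝ, t = (1 + log n)⁻¹ := ⟨_, rfl⟩
  have ht₀ : 0 < t := by rw [ht]; positivity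
  have htlog : t * log n ≤ 1 := by
    rw [ht, inv_mul_le_iff₀ (by positivity)]
    linarith
  have hzeta := prod_primesLE_rpow_neg_le (lt_add_of_pos_right 1 ht₀) n
  rw [add_sub_cancel_left] at hzeta
  calc ∏ p ∈ primesLE n, (1 - (p : ℝ)⁻¹)⁻¹
      ≤ ∏ p ∈ primesLE n, (1 - (p : ℝ) ^ (-(1 + t)))⁻¹ * exp (2 * t * (log p / p)) := by
        refine prod_le_prod (fun p hp ↦ ?_) fun p hp ↦ ?_
        · exact zero_le_one.trans (one_le_inv_one_sub_inv (mod_cast one_lt_of_mem_primesLE hp))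
        · exact inv_one_sub_inv_le_mul_exp (mod_cast two_le_of_mem_primesLE hp) ht₀.le
    _ = (∏ p ∈ primesLE n, (1 - (p : ℝ) ^ (-(1 + t)))⁻¹) *
          exp (2 * t * ∑ p ∈ primesLE n, log p / p) := by
        rw [prod_mul_distrib, ← exp_sum, mul_sum]
    _ ≤ (1 + t⁻¹) * exp (2 * t * (2 * log n)) := by
        grw [hzeta, sum_primesLE_log_div_le]
    _ ≤ (2 + log n) * exp 4 := by
        refine mul_le_mul ?_ (exp_le_exp.mpr (by linarith)) (exp_nonneg _) (by linarith)
        rw [ht, inv_inv]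
        linarith
    _ = exp 4 * (2 + log n) := mul_comm _ _

theorem prod_primesLE_sdiff_inv_one_sub_inv_le {x y : ℝ} (hy : 1 < y) (hyx : y ≤ x) :
    ∏ p ∈ primesLE ⌊x⌋₊ \ primesLE ⌊y⌋₊, (1 - (p : ℝ)⁻¹)⁻¹ ≤ exp 4 * (2 + log x) / log y := by
  have hx : 1 ≤ ⌊x⌋₊ := (one_le_floor_iff x).mpr (by linarith)
  have hone : ∀ p ∈ primesLE ⌊x⌋₊ \ primesLE ⌊y⌋₊, 1 ≤ (1 - (p : ℝ)⁻¹)⁻¹ := fun p hp ↦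
    one_le_inv_one_sub_inv (mod_cast one_lt_of_mem_primesLE (mem_sdiff.mp hp).1)
  have hlow : log y ≤ ∏ p ∈ primesLE ⌊y⌋₊, (1 - (p : ℝ)⁻¹)⁻¹ :=
    (log_le_log (by linarith) (lt_floor_add_one y).le).trans (log_add_one_le_prod_primesLE _)
  rw [le_div_iff₀ (log_pos hy)]
  calc (∏ p ∈ primesLE ⌊x⌋₊ \ primesLE ⌊y⌋₊, (1 - (p : ℝ)⁻¹)⁻¹) * log y
      ≤ (∏ p ∈ primesLE ⌊x⌋₊ \ primesLE ⌊y⌋₊, (1 - (p : ℝ)⁻¹)⁻¹) *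
          ∏ p ∈ primesLE ⌊y⌋₊, (1 - (p : ℝ)⁻¹)⁻¹ :=
        mul_le_mul_of_nonneg_left hlow (zero_le_one.trans (one_le_prod hone))
    _ = ∏ p ∈ primesLE ⌊x⌋₊, (1 - (p : ℝ)⁻¹)⁻¹ :=
        prod_sdiff (primesLE_mono (floor_le_floor hyx))
    _ ≤ exp 4 * (2 + log ⌊x⌋₊) := prod_primesLE_inv_one_sub_inv_le _
    _ ≤ exp 4 * (2 + log x) := by
        gcongr
        exact floor_le (by linarith)

theorem div_totient_eq_prod {a : ℕ} (ha : a ≠ 0) :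
    (a : ℝ) / φ a = ∏ p ∈ a.primeFactors, (1 - (p : ℝ)⁻¹)⁻¹ := by
  have htot : (φ a : ℝ) = a * ∏ p ∈ a.primeFactors, (1 - (p : ℝ)⁻¹) := by
    simpa using congrArg (Rat.cast : ℚ → ℝ) (totient_eq_mul_prod_factors a)
  rw [htot, prod_inv_distrib, div_mul_cancel_left₀ (cast_ne_zero.mpr ha)]

theorem card_primeFactors_mul_log_two_le (a : ℕ) : #a.primeFactors * log 2 ≤ log a := by
  rcases eq_or_ne a 0 with rfl | ha
  · simp
  have hpow : 2 ^ #a.primeFactors ≤ a :=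
    (pow_card_le_prod _ _ _ fun p hp ↦ (prime_of_mem_primeFactors hp).two_le).trans
      (le_of_dvd (pos_of_ne_zero ha) a.prod_primeFactors_dvd)
  rw [← Real.log_pow]
  exact log_le_log (by positivity) (mod_cast hpow)

theorem inv_one_sub_inv_le_exp {x : ℝ} (hx : 2 ≤ x) : (1 - x⁻¹)⁻¹ ≤ exp (2 / x) := by
  have hinv : x⁻¹ ≤ 2⁻¹ := inv_anti₀ two_pos hx
  have hinv₀ : 0 < x⁻¹ := inv_pos.mpr (by linarith)
  calc (1 - x⁻¹)⁻¹ ≤ 2 / x + 1 := by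
        rw [inv_le_iff_one_le_mul₀ (by linarith), div_eq_mul_inv]
        nlinarith
    _ ≤ exp (2 / x) := add_one_le_exp _

theorem prod_primeFactors_gt_le {a : ℕ} {x : ℝ} (hx : 0 < x) (hax : log a ≤ x) :
    ∏ p ∈ a.primeFactors with ⌊x⌋₊ < p, (1 - (p : ℝ)⁻¹)⁻¹ ≤ exp 4 := by
  have hcard : 2 * #{p ∈ a.primeFactors | ⌊x⌋₊ < p} ≤ 4 * x := by
    have hsub : (#{p ∈ a.primeFactors | ⌊x⌋₊ < p} : ℝ) ≤ #a.primeFactors :=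
      mod_cast card_filter_le _ _
    nlinarith [card_primeFactors_mul_log_two_le a, log_two_gt_d9]
  calc ∏ p ∈ a.primeFactors with ⌊x⌋₊ < p, (1 - (p : ℝ)⁻¹)⁻¹
      ≤ ∏ p ∈ a.primeFactors with ⌊x⌋₊ < p, exp (2 / x) := by
        refine prod_le_prod (fun p hp ↦ ?_) fun p hp ↦ ?_ <;>
          obtain ⟨hpa, hxp⟩ := mem_filter.mp hp <;>
          have hp' := prime_of_mem_primeFactors hpa
        · exact zero_le_one.trans (one_le_inv_one_sub_inv (mod_cast hp'.one_lt))
        · grw [inv_one_sub_inv_le_exp (mod_cast hp'.two_le), lt_of_floor_lt hxp]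
    _ = exp (#{p ∈ a.primeFactors | ⌊x⌋₊ < p} * (2 / x)) := by rw [prod_const, ← exp_nat_mul]
    _ ≤ exp 4 := by
        rw [exp_le_exp, mul_div_assoc', div_le_iff₀ hx]
        linarith

theorem prod_primeFactors_le_prod_primesLE {a : ℕ} {x : ℝ} (ha : a ≠ 0) (hx : 0 < x)
    (hax : log a ≤ x) :
    ∏ p ∈ a.primeFactors, (1 - (p : ℝ)⁻¹)⁻¹ ≤
      exp 4 * ∏ p ∈ primesLE ⌊x⌋₊ with p ∣ a, (1 - (p : ℝ)⁻¹)⁻¹ := by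
  have hsmall : {p ∈ a.primeFactors | ¬ ⌊x⌋₊ < p} = {p ∈ primesLE ⌊x⌋₊ | p ∣ a} := by
    ext p
    simp only [mem_filter, mem_primeFactors, mem_primesLE, not_lt]
    tauto
  rw [← prod_filter_mul_prod_filter_not a.primeFactors (fun p ↦ ⌊x⌋₊ < p), hsmall]
  refine mul_le_mul_of_nonneg_right (prod_primeFactors_gt_le hx hax) (prod_nonneg fun p hp ↦ ?_)
  exact zero_le_one.trans (one_le_inv_one_sub_inv
    (mod_cast one_lt_of_mem_primesLE (mem_filter.mp hp).1))

theorem prod_filter_primesLE_le {x y : ℝ} (hy : 1 < y) (hyx : y ≤ x) (q : ℕ → Prop)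
    [DecidablePred q] :
    ∏ p ∈ primesLE ⌊x⌋₊ with q p, (1 - (p : ℝ)⁻¹)⁻¹ ≤
      exp 4 * (2 + log x) / log y * ∏ p ∈ primesLE ⌊y⌋₊ with q p, (1 - (p : ℝ)⁻¹)⁻¹ := by
  have hone : ∀ n, ∀ p ∈ primesLE n, 1 ≤ (1 - (p : ℝ)⁻¹)⁻¹ := fun n p hp ↦
    one_le_inv_one_sub_inv (mod_cast one_lt_of_mem_primesLE hp)
  rw [← prod_sdiff (filter_subset_filter q (primesLE_mono (floor_le_floor hyx)))]
  refine mul_le_mul_of_nonneg_right ?_ (prod_nonneg fun p hp ↦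
    zero_le_one.trans (hone _ p (mem_filter.mp hp).1))
  refine (prod_le_prod_of_subset_of_one_le ?_ ?_ ?_).trans
    (prod_primesLE_sdiff_inv_one_sub_inv_le hy hyx)
  · grind
  · exact fun p hp ↦ zero_le_one.trans (hone _ p (mem_filter.mp (mem_sdiff.mp hp).1).1)
  · exact fun p hp _ ↦ hone _ p (mem_sdiff.mp hp).1

theorem prod_Ico_inv_one_sub_inv_sq (m : ℕ) :
    ∏ k ∈ Ico 2 (m + 2), (1 - ((k : ℝ) ^ 2)⁻¹)⁻¹ = 2 * (m + 1) / (m + 2) := by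
  induction m with
  | zero => simp
  | succ m ih =>
    have hfactor : (1 : ℝ) - (((m : ℝ) + 2) ^ 2)⁻¹ = (m + 1) * (m + 3) / (m + 2) ^ 2 := by
      field_simp
      ring
    rw [add_right_comm, prod_Ico_succ_top (by lia), ih]
    push_cast
    rw [hfactor]
    field_simp
    ring

theorem prod_inv_one_sub_inv_sq_le {S : Finset ℕ} (hS : ∀ k ∈ S, 2 ≤ k) :
    ∏ k ∈ S, (1 - ((k : ℝ) ^ 2)⁻¹)⁻¹ ≤ 2 := by
  have hone : ∀ k : ℕ, 2 ≤ k → 1 ≤ (1 - ((k : ℝ) ^ 2)⁻¹)⁻¹ := fun k hk ↦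
    one_le_inv_one_sub_inv (one_lt_pow₀ (mod_cast hk) two_ne_zero)
  obtain ⟨m, hm⟩ := S.exists_nat_subset_range
  have hsub : S ⊆ Ico 2 (m + 2) := fun k hk ↦
    mem_Ico.mpr ⟨hS k hk, (mem_range.mp (hm hk)).trans (by lia)⟩
  calc ∏ k ∈ S, (1 - ((k : ℝ) ^ 2)⁻¹)⁻¹
      ≤ ∏ k ∈ Ico 2 (m + 2), (1 - ((k : ℝ) ^ 2)⁻¹)⁻¹ :=
        prod_le_prod_of_subset_of_one_le hsub (fun k hk ↦ zero_le_one.trans (hone k (hS k hk)))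
          fun k hk _ ↦ hone k (mem_Ico.mp hk).1
    _ = 2 * (m + 1) / (m + 2) := prod_Ico_inv_one_sub_inv_sq m
    _ ≤ 2 := by
        rw [div_le_iff₀ (by positivity)]
        linarith

theorem prod_inv_one_sub_inv_le {S : Finset ℕ} (hS : ∀ k ∈ S, 2 ≤ k) :
    ∏ k ∈ S, (1 - (k : ℝ)⁻¹)⁻¹ ≤ 2 * ∏ k ∈ S, (1 + (k : ℝ)⁻¹) := by
  have hfactor : ∀ k ∈ S, (1 - (k : ℝ)⁻¹)⁻¹ = (1 - ((k : ℝ) ^ 2)⁻¹)⁻¹ * (1 + (k : ℝ)⁻¹) := by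
    intro k _
    have hadd : 1 + (k : ℝ)⁻¹ ≠ 0 := by positivity
    rw [show 1 - ((k : ℝ) ^ 2)⁻¹ = (1 - (k : ℝ)⁻¹) * (1 + (k : ℝ)⁻¹) by ring, mul_inv,
      inv_mul_cancel_right₀ hadd]
  rw [prod_congr rfl hfactor, prod_mul_distrib]
  exact mul_le_mul_of_nonneg_right (prod_inv_one_sub_inv_sq_le hS)
    (prod_nonneg fun k _ ↦ by positivity)

theorem two_add_log_max_div_log_le {α L y : ℝ} (hα₀ : 0 < α) (hα₁ : α ≤ 1) (hy : 2 ≤ y)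
    (hLy : L ^ α ≤ y) : (2 + log (max L y)) / log y ≤ 4 / α := by
  have hlog : log 2 ≤ log y := log_le_log two_pos hy
  have hmax : α * log (max L y) ≤ log y := by
    rcases le_total L y with h | h
    · rw [max_eq_right h]
      nlinarith [log_two_gt_d9]
    · have hL : 0 < L := by linarith
      rw [max_eq_left h, ← log_rpow hL]
      exact log_le_log (by positivity) hLy
  rw [div_le_div_iff₀ (by linarith [log_two_gt_d9]) hα₀]
  nlinarith [log_two_gt_d9]

theorem div_totient_le {a : ℕ} {α y : ℝ} (ha : a ≠ 0) (hα₀ : 0 < α) (hα₁ : α ≤ 1) (hy : 2 ≤ y)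
    (hay : log a ^ α ≤ y) :
    (a : ℝ) / φ a ≤ 8 * exp 8 / α * ∏ p ∈ primesLE ⌊y⌋₊ with p ∣ a, (1 + (p : ℝ)⁻¹) := by
  calc (a : ℝ) / φ a = ∏ p ∈ a.primeFactors, (1 - (p : ℝ)⁻¹)⁻¹ := div_totient_eq_prod ha
    _ ≤ exp 4 * ∏ p ∈ primesLE ⌊max (log a) y⌋₊ with p ∣ a, (1 - (p : ℝ)⁻¹)⁻¹ :=
        prod_primeFactors_le_prod_primesLE ha (lt_max_of_lt_right (by linarith)) (le_max_left _ _)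
    _ ≤ exp 4 * (exp 4 * (4 / α) * ∏ p ∈ primesLE ⌊y⌋₊ with p ∣ a, (1 - (p : ℝ)⁻¹)⁻¹) := by
        grw [prod_filter_primesLE_le (by linarith) (le_max_right _ _), mul_div_assoc,
          two_add_log_max_div_log_le hα₀ hα₁ hy hay]
        exact prod_nonneg fun p hp ↦ zero_le_one.trans (one_le_inv_one_sub_inv
          (mod_cast one_lt_of_mem_primesLE (mem_filter.mp hp).1))
    _ ≤ exp 4 * (exp 4 * (4 / α) * (2 * ∏ p ∈ primesLE ⌊y⌋₊ with p ∣ a, (1 + (p : ℝ)⁻¹))) := by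
        grw [prod_inv_one_sub_inv_le fun p hp ↦ two_le_of_mem_primesLE (mem_filter.mp hp).1]
    _ = 8 * exp 8 / α * ∏ p ∈ primesLE ⌊y⌋₊ with p ∣ a, (1 + (p : ℝ)⁻¹) := by
        rw [show (8 : ℝ) = 4 + 4 by norm_num, exp_add]
        ring

theorem prod_filter_dvd_one_add {R : Type*} [CommSemiring R] {P : Finset ℕ}
    (hP : ∀ p ∈ P, p.Prime) (h : ℕ → R) (n : ℕ) :
    ∏ p ∈ P with p ∣ n, (1 + h p) = ∑ T ∈ P.powerset with ∏ p ∈ T, p ∣ n, ∏ p ∈ T, h p := by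
  rw [prod_one_add]
  refine sum_congr (Finset.ext fun T ↦ ?_) fun _ _ ↦ rfl
  simp only [mem_powerset, mem_filter, subset_iff, forall_and]
  refine and_congr_right fun hT ↦ ⟨fun hdvd ↦ ?_, fun hdvd p hp ↦ ?_⟩
  · exact Finset.prod_primes_dvd n (fun p hp ↦ (hP p (hT p hp)).prime) hdvd
  · exact (dvd_prod_of_mem _ hp).trans hdvd

theorem sum_prod_filter_dvd_one_add_le {ι : Type*} {I : Finset ι} {a : ι → ℕ} {P : Finset ℕ}
    (hP : ∀ p ∈ P, p.Prime) {h g : ℕ → ℝ} (hh : ∀ p ∈ P, 0 ≤ h p) {K : ℝ}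
    (hcard : ∀ T ⊆ P, (#{i ∈ I | ∏ p ∈ T, p ∣ a i} : ℝ) ≤ K / ∏ p ∈ T, g p) :
    ∑ i ∈ I, ∏ p ∈ P with p ∣ a i, (1 + h p) ≤ K * ∏ p ∈ P, (1 + h p / g p) := by
  calc ∑ i ∈ I, ∏ p ∈ P with p ∣ a i, (1 + h p)
      = ∑ T ∈ P.powerset, #{i ∈ I | ∏ p ∈ T, p ∣ a i} * ∏ p ∈ T, h p := by
        simp only [prod_filter_dvd_one_add hP, sum_filter]
        rw [sum_comm]
        simp only [← sum_filter, sum_const, nsmul_eq_mul]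
    _ ≤ ∑ T ∈ P.powerset, K / (∏ p ∈ T, g p) * ∏ p ∈ T, h p := by
        refine sum_le_sum fun T hT ↦ ?_
        have hTP := mem_powerset.mp hT
        exact mul_le_mul_of_nonneg_right (hcard T hTP) (prod_nonneg fun p hp ↦ hh p (hTP hp))
    _ = K * ∏ p ∈ P, (1 + h p / g p) := by
        rw [prod_one_add, mul_sum]
        refine sum_congr rfl fun T _ ↦ ?_
        rw [prod_div_distrib, div_mul_eq_mul_div, mul_div_assoc]

theorem map_prod_of_primes {R : Type*} [CommMonoid R] {g : ℕ → R} (hg₁ : g 1 = 1)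
    (hg : ∀ m n : ℕ, 0 < m → 0 < n → Nat.Coprime m n → g (m * n) = g m * g n)
    {T : Finset ℕ} (hT : ∀ p ∈ T, p.Prime) : g (∏ p ∈ T, p) = ∏ p ∈ T, g p := by
  induction T using Finset.induction_on with
  | empty => simp [hg₁]
  | insert p T hpT ih =>
    obtain ⟨hp, hT⟩ := forall_mem_insert .. |>.mp hT
    have hcop : Nat.Coprime p (∏ q ∈ T, q) := Nat.Coprime.prod_right fun q hq ↦
      (coprime_primes hp (hT q hq)).mpr (ne_of_mem_of_not_mem hq hpT).symm
    rw [prod_insert hpT, prod_insert hpT, hg _ _ hp.pos (prod_pos fun q hq ↦ (hT q hq).pos) hcop,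
      ih hT]

theorem squarefree_prod_of_primes {T : Finset ℕ} (hT : ∀ p ∈ T, p.Prime) :
    Squarefree (∏ p ∈ T, p) :=
  Finset.squarefree_prod_of_pairwise_isCoprime
    (fun p hp q hq hpq ↦ coprime_iff_isRelPrime.mp
      ((coprime_primes (hT p hp) (hT q hq)).mpr hpq)) fun p hp ↦ (hT p hp).squarefree

theorem le_of_dvd_prod_primesLE {y : ℝ} (hy : 0 ≤ y) {T : Finset ℕ} (hT : T ⊆ primesLE ⌊y⌋₊)
    {p : ℕ} (hp : p.Prime) (hpT : p ∣ ∏ q ∈ T, q) : (p : ℝ) ≤ y := by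
  obtain ⟨q, hq, hpq⟩ := (hp.prime.dvd_finsetProd_iff _).mp hpT
  rw [(Nat.prime_dvd_prime_iff_eq hp (prime_of_mem_primesLE (hT hq))).mp hpq]
  exact (le_floor_iff hy).mp (le_of_mem_primesLE (hT hq))

end

/-- Theorem (Radomskii, Theorem 1): upper bound for `∑ (a_n/φ(a_n))^s` in terms of a
multiplicative function `g` controlling the divisor-counting function `ω`. -/
theorem sum_totient_ratio_pow_le :
    ∃ c : ℝ, 0 < c ∧
      ∀ (N M : ℕ), 0 < N → 0 < M →
      ∀ a : ℕ → ℕ, (∀ n, 1 ≤ n → n ≤ N → 0 < a n ∧ a n ≤ M) →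
      ∀ α : ℝ, α ∈ Set.Ioc (0 : ℝ) 1 →
      ∀ y : ℝ, y = max (Real.log M ^ α) 2 →
      ∀ K : ℝ, 0 < K →
      ∀ g : ℕ → ℝ, g 1 = 1 →
      (∀ m n : ℕ, 0 < m → 0 < n → Nat.Coprime m n → g (m * n) = g m * g n) →
      (∀ n : ℕ, Squarefree n → (∀ p : ℕ, p.Prime → p ∣ n → (p : ℝ) ≤ y) → 0 < g n) →
      (∀ n : ℕ, Squarefree n → (∀ p : ℕ, p.Prime → p ∣ n → (p : ℝ) ≤ y) →
        (((Finset.Icc 1 N).filter fun k => n ∣ a k).card : ℝ) ≤ K / g n) →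
      ∀ s : ℕ, 0 < s →
      ∑ n ∈ Finset.Icc 1 N, ((a n : ℝ) / (Nat.totient (a n) : ℝ)) ^ s ≤
        K * (c / α) ^ s *
          ∏ p ∈ (Finset.range (⌊y⌋₊ + 1)).filter Nat.Prime,
            (1 + ((1 + 1 / (p : ℝ)) ^ s - 1) / g p) := by
  refine ⟨8 * Real.exp 8, by positivity, ?_⟩
  intro N M _ _ a ha α ⟨hα₀, hα₁⟩ y hy K _ g hg₁ hg _ hω s _
  have hy₂ : 2 ≤ y := hy ▸ le_max_right _ _
  have hratio : ∀ n ∈ Finset.Icc 1 N, ((a n : ℝ) / Nat.totient (a n)) ^ s ≤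
      (8 * Real.exp 8 / α) ^ s *
        ∏ p ∈ Nat.primesLE ⌊y⌋₊ with p ∣ a n, (1 + ((1 + 1 / (p : ℝ)) ^ s - 1)) := by
    intro n hn
    obtain ⟨hpos, hle⟩ := ha n (Finset.mem_Icc.mp hn).1 (Finset.mem_Icc.mp hn).2
    have hlog : Real.log (a n) ^ α ≤ y := by grw [hle, hy, ← le_max_left]
    simp only [add_sub_cancel, Finset.prod_pow, one_div, ← mul_pow]
    exact pow_le_pow_left₀ (by positivity : (0 : ℝ) ≤ a n / Nat.totient (a n))
      (div_totient_le hpos.ne' hα₀ hα₁ hy₂ hlog) s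
  have hcard : ∀ T ⊆ Nat.primesLE ⌊y⌋₊,
      (((Finset.Icc 1 N).filter fun k => ∏ p ∈ T, p ∣ a k).card : ℝ) ≤ K / ∏ p ∈ T, g p := by
    intro T hT
    have hprime : ∀ p ∈ T, p.Prime := fun p hp ↦ Nat.prime_of_mem_primesLE (hT hp)
    rw [← map_prod_of_primes hg₁ hg hprime]
    exact hω _ (squarefree_prod_of_primes hprime) fun p ↦ le_of_dvd_prod_primesLE (by linarith) hT
  rw [mul_comm K, mul_assoc]
  refine (Finset.sum_le_sum hratio).trans ?_
  rw [← Finset.mul_sum]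
  refine mul_le_mul_of_nonneg_left (sum_prod_filter_dvd_one_add_le
    (fun p ↦ Nat.prime_of_mem_primesLE) (fun p _ ↦ ?_) hcard) (by positivity)
  exact sub_nonneg.mpr (one_le_pow₀ (le_add_of_nonneg_right (by positivity)))
end

section
/- Let s ∈ ℕ, let y ≥ 2 be real, and let 𝒟 be the collection of squarefree positive integers all of whose prime divisors lie in (1, y] (with 1 ∈ 𝒟). Define f : ℕ → ℝ by f(n) = Σ μ²(d_1)···μ²(d_s)/(d_1···d_s), where the sum runs over all tuples (d_1, ..., d_s) of elements of 𝒟 with lcm(d_1, ..., d_s) = n (so f(n) = 0 for n ∉ 𝒟). Then f is multiplicative, i.e., f(1) = 1 and f(mn) = f(m)·f(n) whenever gcd(m,n) = 1; moreover, for every prime p ≤ y one has f(p) = (1 + 1/p)^s − 1. -/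
open scoped Classical

/-!
Grouping the tuples of divisors of `n` by their least common multiple gives
`∑_{e ∣ n} ∑_{lcm d = e} ∏ gᵢ(dᵢ) = ∏ᵢ ∑_{d ∣ n} gᵢ(d)`. The right-hand side is multiplicative
in `n` when the `gᵢ` are, so by Möbius inversion the sum over tuples with `lcm d = n` is
multiplicative too; its value at a prime `p` is the right-hand side at `p` minus that at `1`.
-/

open ArithmeticFunction
open scoped ArithmeticFunction.zeta ArithmeticFunction.Moebius

section LcmConvolution

variable {ι : Type*} [Fintype ι] [DecidableEq ι]

/-- The lcm-convolution of a finite family of arithmetic functions: its value at `n` is the sum of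
`∏ i, g i (d i)` over the tuples `d` of positive integers with least common multiple `n`. Such
tuples consist of divisors of `n`, which makes the sum finite. -/
def lcmConvolution {R : Type*} [CommSemiring R] (g : ι → ArithmeticFunction R) :
    ArithmeticFunction R where
  toFun n := ∑ d ∈ Fintype.piFinset (fun _ : ι => n.divisors) with Finset.univ.lcm d = n,
    ∏ i, g i (d i)
  map_zero' := by
    refine Finset.sum_eq_zero fun d hd => ?_
    obtain ⟨hdvd, hlcm⟩ := Finset.mem_filter.mp hd
    obtain ⟨i, -, -⟩ := Finset.lcm_eq_zero_iff.mp hlcm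
    simpa using Fintype.mem_piFinset.mp hdvd i

theorem lcmConvolution_apply {R : Type*} [CommSemiring R] (g : ι → ArithmeticFunction R) (n : ℕ) :
    lcmConvolution g n =
      ∑ d ∈ Fintype.piFinset (fun _ : ι => n.divisors) with Finset.univ.lcm d = n,
        ∏ i, g i (d i) :=
  rfl

theorem piFinset_divisors_filter_lcm_eq_of_dvd {e n : ℕ} (hn : n ≠ 0) (he : e ∣ n) :
    {d ∈ Fintype.piFinset (fun _ : ι => e.divisors) | Finset.univ.lcm d = e} =
      {d ∈ Fintype.piFinset (fun _ : ι => n.divisors) | Finset.univ.lcm d = e} := by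
  ext d
  simp only [Finset.mem_filter, Fintype.mem_piFinset, Nat.mem_divisors]
  refine and_congr_left fun hlcm => forall_congr' fun i => ?_
  have hdvd : d i ∣ e := hlcm ▸ Finset.dvd_lcm (Finset.mem_univ i)
  simp [hdvd, hdvd.trans he, hn, ne_zero_of_dvd_ne_zero hn he]

theorem sum_divisors_lcmConvolution {R : Type*} [CommSemiring R] (g : ι → ArithmeticFunction R)
    {n : ℕ} (hn : n ≠ 0) :
    ∑ e ∈ n.divisors, lcmConvolution g e = ∏ i, ∑ d ∈ n.divisors, g i d := by
  have lcm_mem : ∀ d ∈ Fintype.piFinset (fun _ : ι => n.divisors),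
      Finset.univ.lcm d ∈ n.divisors := fun d hd =>
    Nat.mem_divisors.mpr ⟨Finset.lcm_dvd fun i _ =>
      Nat.dvd_of_mem_divisors (Fintype.mem_piFinset.mp hd i), hn⟩
  calc
    ∑ e ∈ n.divisors, lcmConvolution g e
      = ∑ e ∈ n.divisors,
          ∑ d ∈ Fintype.piFinset (fun _ : ι => n.divisors) with Finset.univ.lcm d = e,
            ∏ i, g i (d i) := Finset.sum_congr rfl fun e he => by
        rw [lcmConvolution_apply,
          piFinset_divisors_filter_lcm_eq_of_dvd hn (Nat.dvd_of_mem_divisors he)]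
    _ = ∑ d ∈ Fintype.piFinset (fun _ : ι => n.divisors), ∏ i, g i (d i) :=
        Finset.sum_fiberwise_of_maps_to lcm_mem _
    _ = ∏ i, ∑ d ∈ n.divisors, g i d := (Finset.prod_univ_sum _ _).symm

theorem isMultiplicative_of_zeta_mul {R : Type*} [CommRing R] {f : ArithmeticFunction R}
    (hf : IsMultiplicative ((ζ : ArithmeticFunction R) * f)) : f.IsMultiplicative := by
  have inversion : (μ : ArithmeticFunction R) * ((ζ : ArithmeticFunction R) * f) = f := by
    rw [← mul_assoc, coe_moebius_mul_coe_zeta, one_mul]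
  exact inversion ▸ isMultiplicative_moebius.intCast.mul hf

variable {R : Type*} [CommRing R] {g : ι → ArithmeticFunction R}

theorem isMultiplicative_lcmConvolution (hg : ∀ i, (g i).IsMultiplicative) :
    (lcmConvolution g).IsMultiplicative := by
  have zeta_mul_apply {n : ℕ} (hn : n ≠ 0) :
      ((ζ : ArithmeticFunction R) * lcmConvolution g) n =
        ∏ i, ((ζ : ArithmeticFunction R) * g i) n := by
    simpa only [coe_zeta_mul_apply] using sum_divisors_lcmConvolution g hn
  have zeta_mul (i : ι) : IsMultiplicative ((ζ : ArithmeticFunction R) * g i) :=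
    isMultiplicative_zeta.natCast.mul (hg i)
  refine isMultiplicative_of_zeta_mul (IsMultiplicative.iff_ne_zero.mpr ⟨?_, ?_⟩)
  · simp only [zeta_mul_apply one_ne_zero, (zeta_mul _).map_one, Finset.prod_const_one]
  · intro m n hm hn hmn
    simp only [zeta_mul_apply, hm, hn, mul_ne_zero hm hn, ne_eq, not_false_eq_true,
      (zeta_mul _).map_mul_of_coprime hmn, Finset.prod_mul_distrib]

theorem lcmConvolution_apply_prime (hg : ∀ i, g i 1 = 1) {p : ℕ} (hp : p.Prime) :
    lcmConvolution g p = ∏ i, (1 + g i p) - 1 := by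
  have at_one : lcmConvolution g 1 = 1 := by
    simpa [hg] using sum_divisors_lcmConvolution g one_ne_zero
  have at_prime : lcmConvolution g 1 + lcmConvolution g p = ∏ i, (1 + g i p) := by
    simpa [hp.sum_divisors, hg, add_comm] using sum_divisors_lcmConvolution g hp.ne_zero
  rw [← at_prime, at_one, add_sub_cancel_left]

end LcmConvolution

section SquarefreeReciprocal

variable {K : Type*} [Field K] (P : ℕ → Prop)

/-- The weight `μ²(n) / n` supported on the set `𝒟` of squarefree integers all of whose prime
divisors satisfy `P`. -/
noncomputable def squarefreeReciprocal : ArithmeticFunction K where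
  toFun n := if Squarefree n ∧ ∀ p : ℕ, p.Prime → p ∣ n → P p then (μ n : K) ^ 2 / n else 0
  map_zero' := by simp

theorem squarefreeReciprocal_apply (n : ℕ) :
    squarefreeReciprocal (K := K) P n =
      if Squarefree n ∧ ∀ p : ℕ, p.Prime → p ∣ n → P p then (μ n : K) ^ 2 / n else 0 :=
  rfl

theorem forall_prime_dvd_mul_iff {m n : ℕ} :
    (∀ p : ℕ, p.Prime → p ∣ m * n → P p) ↔
      (∀ p : ℕ, p.Prime → p ∣ m → P p) ∧ ∀ p : ℕ, p.Prime → p ∣ n → P p :=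
  ⟨fun h => ⟨fun p hp hpm => h p hp (hpm.mul_right n),
      fun p hp hpn => h p hp (hpn.mul_left m)⟩,
    fun ⟨hm, hn⟩ p hp hpmn => (hp.dvd_mul.mp hpmn).elim (hm p hp) (hn p hp)⟩

theorem isMultiplicative_squarefreeReciprocal :
    (squarefreeReciprocal (K := K) P).IsMultiplicative := by
  refine ⟨?_, fun {m n} hmn => ?_⟩
  · have one_mem (p : ℕ) (hp : p.Prime) (hdvd : p ∣ 1) : P p := absurd hdvd hp.not_dvd_one
    rw [squarefreeReciprocal_apply, if_pos ⟨squarefree_one, one_mem⟩]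
    simp
  · have weight_mul : (μ (m * n) : K) ^ 2 / (m * n : ℕ) =
        (μ m : K) ^ 2 / m * ((μ n : K) ^ 2 / n) := by
      rw [isMultiplicative_moebius.map_mul_of_coprime hmn, Int.cast_mul, Nat.cast_mul, mul_pow,
        mul_div_mul_comm]
    simp only [squarefreeReciprocal_apply, Nat.squarefree_mul hmn, forall_prime_dvd_mul_iff,
      weight_mul, ite_zero_mul_ite_zero, and_and_and_comm]

theorem squarefreeReciprocal_apply_prime {p : ℕ} (hp : p.Prime) (hP : P p) :
    squarefreeReciprocal P p = 1 / (p : K) := by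
  have dvd_prime (q : ℕ) (hq : q.Prime) (hqp : q ∣ p) : P q :=
    (Nat.prime_dvd_prime_iff_eq hq hp).mp hqp ▸ hP
  rw [squarefreeReciprocal_apply, if_pos ⟨hp.prime.squarefree, dvd_prime⟩, moebius_apply_prime hp]
  simp

theorem lcmConvolution_squarefreeReciprocal_apply {ι : Type*} [Fintype ι] [DecidableEq ι]
    (n : ℕ) :
    lcmConvolution (fun _ : ι => squarefreeReciprocal (K := K) P) n =
      ∑ d ∈ Fintype.piFinset (fun _ : ι => n.divisors),
        if (∀ i, Squarefree (d i) ∧ ∀ p : ℕ, p.Prime → p ∣ d i → P p) ∧ Finset.univ.lcm d = n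
        then ∏ i, (μ (d i) : K) ^ 2 / (d i : K) else 0 := by
  simp only [lcmConvolution_apply, squarefreeReciprocal_apply, Finset.sum_filter,
    Fintype.prod_ite_zero, ← ite_and, and_comm]

end SquarefreeReciprocal

theorem multiplicative_lcm_sum_general {ι R : Type*} [Fintype ι] [DecidableEq ι]
    [CommRing R] {g : ι → ArithmeticFunction R} (hg : ∀ i, (g i).IsMultiplicative) :
    (lcmConvolution g).IsMultiplicative ∧
      ∀ p : ℕ, p.Prime → lcmConvolution g p = ∏ i, (1 + g i p) - 1 :=
  ⟨isMultiplicative_lcmConvolution hg, fun _ => lcmConvolution_apply_prime fun i => (hg i).map_one⟩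

/-- The function `f(n) = ∑_{d₁,…,d_s ∈ 𝒟, [d₁,…,d_s] = n} μ²(d₁)⋯μ²(d_s)/(d₁⋯d_s)`,
where `𝒟` is the set of squarefree positive integers all of whose prime factors are at
most `y`, is multiplicative, and `f(p) = (1 + 1/p)^s - 1` for every prime `p ≤ y`. -/
theorem multiplicative_lcm_sum (s : ℕ) (hs : 0 < s) (y : ℝ) (hy : 2 ≤ y) (f : ℕ → ℝ)
    (hf : ∀ n : ℕ, f n =
      ∑ d ∈ Fintype.piFinset (fun _ : Fin s => n.divisors),
        if (∀ i, Squarefree (d i) ∧ ∀ p : ℕ, p.Prime → p ∣ d i → (p : ℝ) ≤ y) ∧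
            Finset.univ.lcm d = n
        then ∏ i, ((ArithmeticFunction.moebius (d i) : ℤ) : ℝ) ^ 2 / (d i : ℝ)
        else 0) :
    f 1 = 1 ∧
    (∀ m n : ℕ, 0 < m → 0 < n → Nat.Coprime m n → f (m * n) = f m * f n) ∧
    (∀ p : ℕ, p.Prime → (p : ℝ) ≤ y → f p = (1 + 1 / (p : ℝ)) ^ s - 1) := by
  let P (p : ℕ) : Prop := (p : ℝ) ≤ y
  obtain rfl : f = lcmConvolution (fun _ : Fin s => squarefreeReciprocal P) :=
    funext fun n => by
      rw [hf, lcmConvolution_squarefreeReciprocal_apply]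
      congr! -- the two sums differ in their `Decidable` instances
  obtain ⟨hmul, hprime⟩ := multiplicative_lcm_sum_general
    fun _ : Fin s => isMultiplicative_squarefreeReciprocal (K := ℝ) P
  refine ⟨hmul.map_one, fun m n _ _ => hmul.map_mul_of_coprime, fun p hp hpy => ?_⟩
  simp only [hprime p hp, squarefreeReciprocal_apply_prime P hp hpy, Fin.prod_const]
end

section
/- Let g be an arithmetic function with g(p) > 0 for every prime p, and suppose L := Σ_p 1/(p·g(p)) < ∞, where the sum runs over all primes. Then for every s ∈ ℕ, Π_{p > s} (1 + ((1 + 1/p)^s − 1)/g(p)) ≤ exp(e·L·s), where the product runs over all primes p > s and e is the base of the natural logarithm. -/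
/-!
For `p ≥ s` the number `s / p` is at most `1`, so `(1 + 1/p)^s - 1 ≤ exp (s/p) - 1 ≤ e s / p`: each
factor exceeds `1` by at most `e s` times the matching term of `L`. Then use `1 + u ≤ exp u`.
-/

open Real

theorem exp_sub_one_le_mul_exp (t : ℝ) : exp t - 1 ≤ t * exp t := by
  have one_le : (1 - t) * exp t ≤ 1 :=
    calc (1 - t) * exp t ≤ exp (-t) * exp t := by gcongr; exact one_sub_le_exp_neg t
      _ = 1 := by rw [← exp_add, neg_add_cancel, exp_zero]
  linarith

theorem one_add_rpow_le_exp_mul {a s : ℝ} (ha : -1 ≤ a) (hs : 0 ≤ s) :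
    (1 + a) ^ s ≤ exp (a * s) := by
  rw [exp_mul]
  exact rpow_le_rpow (by linarith) (by linarith [add_one_le_exp a]) hs

theorem one_add_rpow_sub_one_le {a s : ℝ} (ha : 0 ≤ a) (hs : 0 ≤ s) (has : a * s ≤ 1) :
    (1 + a) ^ s - 1 ≤ exp 1 * s * a :=
  calc (1 + a) ^ s - 1 ≤ exp (a * s) - 1 := by
        gcongr; exact one_add_rpow_le_exp_mul (by linarith) hs
    _ ≤ a * s * exp (a * s) := exp_sub_one_le_mul_exp _
    _ ≤ a * s * exp 1 := by gcongr
    _ = exp 1 * s * a := by ring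

theorem tprod_one_add_le_exp_tsum {ι : Type*} {u : ι → ℝ} (hu : ∀ i, -1 ≤ u i)
    (hsum : Summable u) : ∏' i, (1 + u i) ≤ exp (∑' i, u i) :=
  le_of_tendsto_of_tendsto' (Real.multipliable_one_add_of_summable hsum).hasProd
    hsum.hasSum.rexp fun _ ↦ Finset.prod_le_prod (fun i _ ↦ by linarith [hu i])
      fun i _ ↦ by simpa only [Function.comp_apply, add_comm] using add_one_le_exp (u i)

theorem prod_large_primes_le_exp_general {ι : Type*} {x g : ι → ℝ} (hx : ∀ i, 0 < x i)
    (hg : ∀ i, 0 < g i) (hsum : Summable fun i ↦ 1 / (x i * g i)) {s : ℝ} (hs : 0 ≤ s)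
    {P : ι → Prop} (hP : ∀ i, P i → s ≤ x i) :
    (Multipliable fun i : {i // P i} ↦ 1 + ((1 + 1 / x i) ^ s - 1) / g i) ∧
      ∏' i : {i // P i}, (1 + ((1 + 1 / x i) ^ s - 1) / g i) ≤
        exp (exp 1 * (∑' i, 1 / (x i * g i)) * s) := by
  set u : {i // P i} → ℝ := fun i ↦ ((1 + 1 / x i) ^ s - 1) / g i
  set v : ι → ℝ := fun i ↦ 1 / (x i * g i)
  have v_nonneg (i : ι) : 0 ≤ v i := (one_div_pos.2 (mul_pos (hx i) (hg i))).le
  have one_div_x_nonneg (i : ι) : 0 ≤ 1 / x i := (one_div_pos.2 (hx i)).le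
  have u_nonneg (i : {i // P i}) : 0 ≤ u i :=
    div_nonneg (sub_nonneg.2 (one_le_rpow (by linarith [one_div_x_nonneg i]) hs)) (hg i).le
  have u_le (i : {i // P i}) : u i ≤ exp 1 * s * v i := by
    have one_div_x_mul_le : 1 / x i * s ≤ 1 := by
      rw [one_div_mul_eq_div]
      exact div_le_one_of_le₀ (hP i i.2) (hx i).le
    calc u i ≤ exp 1 * s * (1 / x i) / g i :=
          div_le_div_of_nonneg_right
            (one_add_rpow_sub_one_le (one_div_x_nonneg i) hs one_div_x_mul_le) (hg i).le
      _ = exp 1 * s * v i := by rw [mul_div_assoc, div_div]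
  have summable_v : Summable fun i : {i // P i} ↦ v i := hsum.subtype {i | P i}
  have summable_u : Summable u := .of_nonneg_of_le u_nonneg u_le (summable_v.mul_left _)
  refine ⟨Real.multipliable_one_add_of_summable summable_u, ?_⟩
  calc ∏' i, (1 + u i) ≤ exp (∑' i, u i) :=
        tprod_one_add_le_exp_tsum (fun i ↦ by linarith [u_nonneg i]) summable_u
    _ ≤ exp (exp 1 * (∑' i, v i) * s) := exp_le_exp.2 <|
      calc ∑' i, u i ≤ ∑' i : {i // P i}, exp 1 * s * v i :=
            summable_u.tsum_le_tsum u_le (summable_v.mul_left _)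
        _ = exp 1 * s * ∑' i : {i // P i}, v i := tsum_mul_left
        _ ≤ exp 1 * s * ∑' i, v i := by
            gcongr; exact hsum.tsum_subtype_le v {i | P i} v_nonneg
        _ = exp 1 * (∑' i, v i) * s := by ring

/-- If `g(p) > 0` for every prime `p` and `L = ∑_p 1/(p g(p)) < ∞`, then for every `s ∈ ℕ`,
`∏_{p > s} (1 + ((1 + 1/p)^s - 1)/g(p)) ≤ exp(e L s)`. -/
theorem prod_large_primes_le_exp (g : ℕ → ℝ) (hg : ∀ p : ℕ, p.Prime → 0 < g p) (L : ℝ)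
    (hsum : Summable fun p : Nat.Primes => 1 / (((p : ℕ) : ℝ) * g (p : ℕ)))
    (hL : (∑' p : Nat.Primes, 1 / (((p : ℕ) : ℝ) * g (p : ℕ))) = L) :
    ∀ s : ℕ, 0 < s →
      (∏' q : {p : Nat.Primes // s < (p : ℕ)},
          (1 + ((1 + 1 / (((q : Nat.Primes) : ℕ) : ℝ)) ^ s - 1) / g ((q : Nat.Primes) : ℕ))) ≤
        Real.exp (Real.exp 1 * L * s) := by
  intro s _
  simpa only [rpow_natCast, hL] using (prod_large_primes_le_exp_general
    (fun p : Nat.Primes ↦ Nat.cast_pos.2 p.2.pos) (fun p ↦ hg p p.2) hsum s.cast_nonneg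
    (P := (s < ·)) fun p hp ↦ Nat.cast_le.2 hp.le).2
end
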